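/- There exist a finite alphabet B, a cellular automaton S on B, and states κ, γ ∈ B with κ spreading for S, such that: (1) for every J ∈ ℕ there is a configuration z ∈ B^ℤ with S^J(z) equal to the uniform configuration of γ's and with S^j(z)_i ≠ γ for all i ∈ ℤ and all j < J; and (2) every configuration x in the limit set Ω_S with x₀ = γ satisfies x_i ∈ {κ, γ} for all i ∈ ℤ. -/

import Mathlib

/-- The configuration space of a one-dimensional cellular automaton over alphabet `B`. -/
abbrev Config (B : Type*) := ℤ → B

/-- The global map induced by the local rule `f` of radius `r`. -/
def caMap {B : Type*} (r : ℕ) (f : (Fin (2 * r + 1) → B) → B) : Config B → Config B :=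
  fun x i => f fun j => x (i - (r : ℤ) + ((j : ℕ) : ℤ))

/-- The limit set `Ω_F = ⋂_{j ∈ ℕ} F^j(B^ℤ)`. -/
def limitSet {B : Type*} (F : Config B → Config B) : Set (Config B) :=
  ⋂ j : ℕ, Set.range F^[j]

/-- A state `θ` is spreading for the local rule `f` if `f(u) = θ` whenever the
letter `θ` occurs in `u`. -/
def SpreadingRule {B : Type*} {n : ℕ} (f : (Fin n → B) → B) (θ : B) : Prop :=
  ∀ u : Fin n → B, (∃ j, u j = θ) → f u = θ

/-!
Signals of speeds `-2, …, 2` move over the cells. When the signals `-2, 0, 2` or `-1, 1` meet in a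
cell, it becomes an emission point, from which signals of all speeds start; signals of speeds `-2`
and `2` may also just pass through each other, and every other encounter kills the cell. A cell
surrounded by emission points fires.

Two emission points at distance `2 * L` emit signals which, `L` steps later, meet at distances
`0, L, 2 * L` from the left point. So emission points at all multiples of `2 ^ k` lead to emission
points at all multiples of `2 ^ (k - 1)`, and finally to all cells firing at once.

Conversely, look backwards from a firing cell, where emission points are adjacent. Let two emission
points have distance `L`, and let `L` steps remain. Tracing back the signals which met at these
points, every emission point on their way, and every choice of parities other than opposite ones,
would lead to a forbidden encounter. So there are two emission points at distance `2 * L` when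
`2 * L` steps remain. By iteration, there are pairs of emission points at arbitrarily large
distances, with neighbouring emission points on both sides. If the past of a cell is live, the
signals between these emission points force emission points next to each other at that cell one
step before firing. Their signals of speeds `1` and `-1` cross, so the cell is dead unless it fires.
-/

open scoped Pointwise

noncomputable section

/-! ### Cellular automata and their limit sets -/

/-- The local rule of radius `r` computing `φ`, which depends on the cells `-r, …, r` only. -/
def ofWindow {B : Type*} (r : ℕ) (φ : (ℤ → B) → B) (u : Fin (2 * r + 1) → B) : B :=
  φ fun d => u (Fin.clamp (d + r).toNat (2 * r))

theorem caMap_ofWindow {B : Type*} {r : ℕ} {φ : (ℤ → B) → B}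
    (hφ : DependsOn φ (Set.Icc (-r : ℤ) r)) (x : Config B) (i : ℤ) :
    caMap r (ofWindow r φ) x i = φ fun d => x (i + d) := by
  refine hφ fun d hd => congrArg x ?_
  have := hd.1
  have := hd.2
  rw [Fin.coe_clamp]
  omega

theorem spreadingRule_ofWindow {B : Type*} {r : ℕ} {φ : (ℤ → B) → B} {θ : B}
    (h : ∀ n : ℤ → B, ∀ d ∈ Set.Icc (-r : ℤ) r, n d = θ → φ n = θ) :
    SpreadingRule (ofWindow r φ) θ := by
  rintro u ⟨j, hj⟩
  refine h _ (j - r) ⟨by omega, by omega⟩ ?_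
  rw [← hj]
  congr 1
  ext
  rw [Fin.coe_clamp]
  omega

theorem surjOn_iInter_range_iterate {X : Type*} [TopologicalSpace X] [CompactSpace X] [T2Space X]
    {F : X → X} (hF : Continuous F) :
    Set.SurjOn F (⋂ j : ℕ, Set.range F^[j]) (⋂ j : ℕ, Set.range F^[j]) := by
  intro x hx
  rw [Set.mem_iInter] at hx
  have hcompact (j : ℕ) : IsCompact (F ⁻¹' {x} ∩ Set.range F^[j]) :=
    (isCompact_range (hF.iterate j)).inter_left (isClosed_singleton.preimage hF)
  obtain ⟨y, hy⟩ := IsCompact.nonempty_iInter_of_sequence_nonempty_isCompact_isClosed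
    (fun j : ℕ => F ⁻¹' {x} ∩ Set.range F^[j])
    (fun j => Set.inter_subset_inter_right _ <| by
      rintro _ ⟨z, rfl⟩
      exact ⟨F z, rfl⟩)
    (fun j => by
      obtain ⟨z, hz⟩ := hx (j + 1)
      exact ⟨F^[j] z, (Function.iterate_succ_apply' F j z).symm.trans hz, z, rfl⟩)
    (hcompact 0) fun j => (hcompact j).isClosed
  rw [← Set.inter_iInter] at hy
  exact ⟨y, hy.2, hy.1⟩

theorem exists_backward_orbit_of_surjOn {X : Type*} {F : X → X} {s : Set X}
    (hF : Set.SurjOn F s s) {x : X} (hx : x ∈ s) :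
    ∃ y : ℕ → X, y 0 = x ∧ ∀ n, F (y (n + 1)) = y n := by
  choose g hgs hg using fun z : s => hF z.2
  let G : s → s := fun z => ⟨g z, hgs z⟩
  refine ⟨fun n => G^[n] ⟨x, hx⟩, rfl, fun n => ?_⟩
  simp only [Function.iterate_succ_apply', G, hg]

theorem continuous_caMap {B : Type*} [TopologicalSpace B] [DiscreteTopology B] (r : ℕ)
    (f : (Fin (2 * r + 1) → B) → B) : Continuous (caMap r f) :=
  continuous_pi fun _ => continuous_of_discreteTopology.comp
    (continuous_pi fun _ => continuous_apply _)

theorem exists_backward_orbit_of_mem_limitSet {B : Type*} [Finite B] {r : ℕ}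
    {f : (Fin (2 * r + 1) → B) → B} {x : Config B} (hx : x ∈ limitSet (caMap r f)) :
    ∃ y : ℕ → Config B, y 0 = x ∧ ∀ n, caMap r f (y (n + 1)) = y n := by
  let : TopologicalSpace B := ⊥
  have : DiscreteTopology B := ⟨rfl⟩
  exact exists_backward_orbit_of_surjOn (surjOn_iInter_range_iterate (continuous_caMap r f)) hx

/-! ### Signals and emission points -/

/-- The possible speeds of a signal. -/
def speeds : Finset ℤ := Finset.Icc (-2) 2

/-- The speeds of the signals reaching cell `p` in one step, when `row q` is the set of speeds of
the signals at cell `q`. -/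
def incoming (row : ℤ → Finset ℤ) (p : ℤ) : Finset ℤ := {v ∈ speeds | v ∈ row (p - v)}

/-- A cell reached by the signals `A` may contain the signals `S` afterwards: either all signals of
one parity have met and the cell becomes an emission point, or the signals pass through. Only
signals of speeds `-2` and `2` may pass through each other. -/
def IsUpdate (A S : Finset ℤ) : Prop :=
  (A = {-2, 0, 2} ∨ A = {-1, 1}) ∧ S = speeds ∨ (∀ v ∈ A, ∀ w ∈ A, 4 ∣ v - w) ∧ S = A

theorem mem_speeds {v : ℤ} : v ∈ speeds ↔ -2 ≤ v ∧ v ≤ 2 := Finset.mem_Icc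

theorem neg_speeds : -speeds = speeds := by
  ext v
  simp only [Finset.mem_neg', mem_speeds]
  omega

theorem mem_incoming {row : ℤ → Finset ℤ} {p v : ℤ} :
    v ∈ incoming row p ↔ v ∈ speeds ∧ v ∈ row (p - v) := Finset.mem_filter

theorem incoming_translate (row : ℤ → Finset ℤ) (i p : ℤ) :
    incoming (fun q => row (i + q)) p = incoming row (i + p) := by
  simp only [incoming, add_sub_assoc]

theorem incoming_reflect (row : ℤ → Finset ℤ) (p : ℤ) :
    incoming (fun q => -row (-q)) p = -incoming row (-p) := by
  ext v
  rw [Finset.mem_neg', mem_incoming, mem_incoming, Finset.mem_neg', ← Finset.mem_neg' (s := speeds),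
    neg_speeds, show -(p - v) = -p - -v by ring]

theorem IsUpdate.neg {A S : Finset ℤ} (h : IsUpdate A S) : IsUpdate (-A) (-S) := by
  rcases h with ⟨rfl | rfl, rfl⟩ | ⟨hA, rfl⟩
  · exact .inl ⟨.inl (by decide), neg_speeds⟩
  · exact .inl ⟨.inr (by decide), neg_speeds⟩
  · refine .inr ⟨fun v hv w hw => ?_, rfl⟩
    have := hA _ (Finset.mem_neg'.1 hv) _ (Finset.mem_neg'.1 hw)
    omega

theorem IsUpdate.unique {A S T : Finset ℤ} (hS : IsUpdate A S) (hT : IsUpdate A T) : S = T := by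
  rcases hS with ⟨hA, rfl⟩ | ⟨hA, rfl⟩ <;> rcases hT with ⟨hA', rfl⟩ | ⟨hA', rfl⟩
  · rfl
  · rcases hA with rfl | rfl <;> exact absurd hA' (by decide)
  · rcases hA' with rfl | rfl <;> exact absurd hA (by decide)
  · rfl

/-- The signals in the past of a configuration, with the laws they obey at the live cells. The
second coordinate counts the time steps that remain, so signals move from `t + 1` to `t`. The
radius `20` is just some large enough number. -/
structure History where
  live : ℤ → ℤ → Prop
  signals : ℤ → ℤ → Finset ℤ
  signals_subset : ∀ p t, signals p t ⊆ speeds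
  live_succ : ∀ {p q t}, live p t → p - 20 ≤ q → q ≤ p + 20 → live q (t + 1)
  not_crossing : ∀ {p q t v}, live p t → p - 20 ≤ q → q < p + 20 → v ∈ signals q (t + 1) →
    v - 2 ∉ signals (q + 1) (t + 1)
  isUpdate : ∀ {p t}, live p t → IsUpdate (incoming (signals · (t + 1)) p) (signals p t)

namespace History

variable {H : History}

/-- The speeds of the signals that reach cell `p` at time `t`. -/
def arrivals (H : History) (p t : ℤ) : Finset ℤ := incoming (H.signals · (t + 1)) p

/-- The cell `p` is an emission point at time `t`: it sends out signals of all speeds. -/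
def Emits (H : History) (p t : ℤ) : Prop := H.signals p t = speeds

theorem mem_arrivals {p t v : ℤ} : v ∈ H.arrivals p t ↔ v ∈ H.signals (p - v) (t + 1) :=
  mem_incoming.trans (and_iff_right_of_imp fun h => H.signals_subset _ _ h)

theorem Emits.mem {p t v : ℤ} (h : H.Emits p t) (hv : v ∈ speeds := by decide) :
    v ∈ H.signals p t := h ▸ hv

/-- The mirror image of a history. -/
def mirror (H : History) : History where
  live p t := H.live (-p) t
  signals p t := -H.signals (-p) t
  signals_subset p t := by
    rw [← neg_speeds]
    exact Finset.neg_subset_neg (H.signals_subset _ _)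
  live_succ h h₁ h₂ := H.live_succ h (by omega) (by omega)
  not_crossing {p q t v} h h₁ h₂ hv hw := by
    refine H.not_crossing (q := -(q + 1)) h (by omega) (by omega) (Finset.mem_neg'.1 hw) ?_
    convert Finset.mem_neg'.1 hv using 2 <;> ring
  isUpdate {p t} h := by
    rw [incoming_reflect (H.signals · (t + 1))]
    exact (H.isUpdate h).neg

theorem mirror_emits {p t : ℤ} : H.mirror.Emits p t ↔ H.Emits (-p) t := by
  rw [Emits, Emits, ← neg_inj, neg_speeds]
  exact iff_of_eq (congrArg (· = speeds) (neg_neg _))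

theorem mirror_arrivals (p t : ℤ) : H.mirror.arrivals p t = -H.arrivals (-p) t :=
  incoming_reflect (H.signals · (t + 1)) p

theorem mem_signals_of_mem_arrivals {p t v : ℤ} (hl : H.live p t) (h : v ∈ H.arrivals p t) :
    v ∈ H.signals p t := by
  rcases H.isUpdate hl with ⟨-, hS⟩ | ⟨-, hS⟩
  · rw [hS]
    exact (mem_incoming.1 h).1
  · rwa [hS]

theorem emits_or_mem_arrivals {p t v : ℤ} (hl : H.live p t) (h : v ∈ H.signals p t) :
    H.Emits p t ∨ v ∈ H.arrivals p t := by
  rcases H.isUpdate hl with ⟨-, hS⟩ | ⟨-, hS⟩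
  · exact .inl hS
  · rw [hS] at h
    exact .inr h

theorem Emits.arrivals_eq {p t : ℤ} (h : H.Emits p t) (hl : H.live p t) :
    H.arrivals p t = {-2, 0, 2} ∨ H.arrivals p t = {-1, 1} := by
  rcases H.isUpdate hl with ⟨hA, -⟩ | ⟨hA, hS⟩
  · exact hA
  · rw [← hS, h] at hA
    exact absurd (hA 0 (by decide) 1 (by decide)) (by decide)

theorem two_dvd_sub_of_mem_arrivals {p t v w : ℤ} (hl : H.live p t) (hv : v ∈ H.arrivals p t)
    (hw : w ∈ H.arrivals p t) : 2 ∣ v - w := by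
  rcases H.isUpdate hl with ⟨hA | hA, -⟩ | ⟨hA, -⟩
  · simp only [arrivals, hA, Finset.mem_insert, Finset.mem_singleton] at hv hw
    omega
  · simp only [arrivals, hA, Finset.mem_insert, Finset.mem_singleton] at hv hw
    omega
  · exact Dvd.dvd.trans (by decide) (hA v hv w hw)

theorem emits_of_mem_signals {p t v w : ℤ} (hl : H.live p t) (hv : v ∈ H.signals p t)
    (hw : w ∈ H.signals p t) (hvw : ¬ 4 ∣ v - w := by decide) : H.Emits p t := by
  rcases H.isUpdate hl with ⟨-, hS⟩ | ⟨hA, hS⟩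
  · exact hS
  · rw [hS] at hv hw
    exact absurd (hA v hv w hw) hvw

/-- It suffices that the last cell is live, since a live cell has a live past. -/
theorem mem_signals_later {p q t t' v : ℤ} (h : v ∈ H.signals p t) (hl : H.live q t')
    (ht : t' ≤ t := by omega) (hq : q = p + v * (t - t') := by omega) : v ∈ H.signals q t' := by
  induction t', ht using Int.leInductionDown generalizing q with
  | base => simpa [hq] using h
  | pred t' _ ih =>
    refine mem_signals_of_mem_arrivals hl (mem_arrivals.2 ?_)
    have hv := mem_speeds.1 (H.signals_subset _ _ h)
    rw [sub_add_cancel]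
    refine ih ?_ (by rw [hq]; ring)
    rw [← sub_add_cancel t' 1]
    exact H.live_succ hl (by omega) (by omega)

theorem mem_signals_earlier {p q t t' v : ℤ} (h : v ∈ H.arrivals p t) (hl : H.live p t)
    (hE : ∀ s, t < s → s < t' → ¬ H.Emits (p - v * (s - t)) s)
    (ht : t < t' := by omega) (hq : q = p - v * (t' - t) := by omega) : v ∈ H.signals q t' := by
  have hv := mem_speeds.1 (H.signals_subset _ _ (mem_arrivals.1 h))
  suffices v ∈ H.signals q t' ∧ H.live q t' from this.1
  induction t', (show t + 1 ≤ t' from ht) using Int.leInduction generalizing q with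
  | base =>
    rw [hq, add_sub_cancel_left, mul_one]
    exact ⟨mem_arrivals.1 h, H.live_succ hl (by omega) (by omega)⟩
  | succ t' ht ih =>
    obtain ⟨ih, hl'⟩ := ih (fun s h₁ h₂ => hE s h₁ (by omega)) (by omega) rfl
    have hq' : q = p - v * (t' - t) - v := by rw [hq]; ring
    refine ⟨?_, H.live_succ hl' (by omega) (by omega)⟩
    rw [hq', ← mem_arrivals]
    exact (emits_or_mem_arrivals hl' ih).resolve_left (hE t' (by omega) (by omega))

theorem not_meet_of_speed_eq_add_one {p p' t v w : ℤ} (hv : v ∈ H.signals p t)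
    (hw : w ∈ H.signals p' t) (hp : p < p' := by omega)
    (hl : H.live (p + v * (p' - p)) (t - (p' - p))) (hvw : v = w + 1 := by norm_num) : False := by
  have hv' := mem_speeds.1 (H.signals_subset _ _ hv)
  have hw' := mem_speeds.1 (H.signals_subset _ _ hw)
  have hva : v ∈ H.arrivals (p + v * (p' - p)) (t - (p' - p)) :=
    mem_arrivals.2 <| mem_signals_later hv (H.live_succ hl (by omega) (by omega)) (by omega)
      (by ring)
  have hwa : w ∈ H.arrivals (p + v * (p' - p)) (t - (p' - p)) :=
    mem_arrivals.2 <| mem_signals_later hw (H.live_succ hl (by omega) (by omega)) (by omega)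
      (by rw [hvw]; ring)
  have := two_dvd_sub_of_mem_arrivals hl hva hwa
  omega

/-- At odd distance the two signals would cross without meeting in a cell. -/
theorem exists_emits_of_speed_eq_add_two {p p' t v w : ℤ} (hv : v ∈ H.signals p t)
    (hw : w ∈ H.signals p' t)
    (hl : ∀ m, p' - p ≤ 2 * m → 2 * m ≤ p' - p + 1 → H.live (p + v * m) (t - m))
    (hp : p < p' := by omega) (hvw : v = w + 2 := by norm_num) :
    ∃ m, p' = p + 2 * m ∧ H.Emits (p + v * m) (t - m) := by
  have hv' := mem_speeds.1 (H.signals_subset _ _ hv)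
  have hw' := mem_speeds.1 (H.signals_subset _ _ hw)
  obtain ⟨m, hm | hm⟩ : ∃ m, p' = p + 2 * m ∨ p' + 1 = p + 2 * m :=
    ⟨(p' - p + 1) / 2, by omega⟩
  · replace hl := hl m (by omega) (by omega)
    exact ⟨m, hm, emits_of_mem_signals hl (mem_signals_later hv hl (by omega) (by ring))
      (mem_signals_later hw hl (by omega) (by rw [hm, hvw]; ring)) (by omega)⟩
  · replace hl := hl m (by omega) (by omega)
    have hl' {q} (h₁ : p + v * m - 20 ≤ q) (h₂ : q ≤ p + v * m + 20) : H.live q (t - m + 1) :=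
      H.live_succ hl h₁ h₂
    refine absurd ?_ (H.not_crossing hl (q := p + v * m - v) (by omega) (by omega)
      (mem_signals_later hv (hl' (by omega) (by omega)) (by omega) (by ring)))
    rw [show v - 2 = w by omega]
    refine mem_signals_later hw (hl' (by omega) (by omega)) (by omega) ?_
    rw [hvw, show p' = p + 2 * m - 1 by omega]
    ring

/-- All cells from which signals can reach cell `i` at time `0` are live. -/
def LivePast (H : History) (i : ℤ) : Prop :=
  ∀ q t, 1 ≤ t → i - 20 * t ≤ q → q ≤ i + 20 * t → H.live q t

theorem LivePast.live {i q t : ℤ} (h : H.LivePast i) (ht : 1 ≤ t := by omega)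
    (h₁ : i - 20 * t ≤ q := by omega) (h₂ : q ≤ i + 20 * t := by omega) : H.live q t :=
  h q t ht h₁ h₂

theorem LivePast.of_one {i : ℤ} (h : ∀ q, i - 20 ≤ q → q ≤ i + 20 → H.live q 1) :
    H.LivePast i := by
  intro q t ht
  induction t, ht using Int.leInduction generalizing q with
  | base => exact fun h₁ h₂ => h q (by omega) (by omega)
  | succ t ht ih =>
    intro h₁ h₂
    exact H.live_succ (ih (max (min q (i + 20 * t)) (i - 20 * t)) (by omega) (by omega))
      (by omega) (by omega)

theorem LivePast.mirror (h : H.LivePast 0) : H.mirror.LivePast 0 := fun q t ht h₁ h₂ =>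
  h (-q) t ht (by omega) (by omega)

/-- Two emission points at distance `L`, around the origin, `L` steps before the end. -/
structure EmissionPair (H : History) (L a : ℤ) : Prop where
  pos : 0 < L
  left_le : a ≤ 0
  right_ge : 0 ≤ a + L
  eq_one_or_even : L = 1 ∨ ∃ k, L = 2 * k
  emits_left : H.Emits a L
  emits_right : H.Emits (a + L) L

theorem EmissionPair.mirror {L a : ℤ} (h : H.EmissionPair L a) :
    H.mirror.EmissionPair L (-a - L) where
  pos := h.pos
  left_le := by linarith [h.right_ge]
  right_ge := by linarith [h.left_le]
  eq_one_or_even := h.eq_one_or_even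
  emits_left := mirror_emits.2 <| by simpa [add_comm] using h.emits_right
  emits_right := mirror_emits.2 <| by simpa using h.emits_left

theorem EmissionPair.of_mirror {L a : ℤ} (h : H.mirror.EmissionPair L a) :
    H.EmissionPair L (-a - L) where
  pos := h.pos
  left_le := by linarith [h.right_ge]
  right_ge := by linarith [h.left_le]
  eq_one_or_even := h.eq_one_or_even
  emits_left := by simpa [sub_eq_add_neg, add_comm] using mirror_emits.1 h.emits_right
  emits_right := by simpa using mirror_emits.1 h.emits_left

theorem emits_of_emits_of_emits {p q t t' L v : ℤ} (h₁ : H.Emits p t) (h₂ : H.Emits (p + 2 * L) t)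
    (hl : H.live q t') (hL : 0 < L := by omega) (hv : 0 ≤ v ∧ v ≤ 2 := by decide)
    (hq : q = p + v * L := by ring) (ht : t' = t - L := by ring) : H.Emits q t' := by
  subst hq ht
  obtain ⟨m, hm, hE⟩ := exists_emits_of_speed_eq_add_two (h₁.mem (v := v) (mem_speeds.2 (by omega)))
    (h₂.mem (v := v - 2) (mem_speeds.2 (by omega)))
    (fun m h₁ h₂ => (show m = L by omega) ▸ hl) (by omega) (by omega)
  obtain rfl : m = L := by omega
  exact hE

/-- The earlier signal of speed `1` and the signal of speed `-1` meet in an emission point, whose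
stationary signal the later signal of speed `1` would hit. -/
theorem not_emits_twice {a d s t : ℤ} (h₁ : (1 : ℤ) ∈ H.signals a (t + s))
    (h₂ : (1 : ℤ) ∈ H.signals a t) (h₃ : (-1 : ℤ) ∈ H.signals (a + d) t)
    (hl : ∀ q t', a ≤ q → q ≤ a + d → t' ≤ t → 2 * (t - t') ≤ d + s → H.live q t')
    (hs : 0 < s := by omega) (hd : s < d := by omega) : False := by
  obtain ⟨m, hm, hE⟩ := exists_emits_of_speed_eq_add_two
    (mem_signals_later h₁ (hl (a + s) t (by omega) (by omega) (by omega) (by omega))) h₃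
    fun m _ _ => hl _ _ (by omega) (by omega) (by omega) (by omega)
  exact not_meet_of_speed_eq_add_one
    (mem_signals_later h₂ (hl (a + m) (t - m) (by omega) (by omega) (by omega) (by omega)))
    (hE.mem (v := 0)) (by omega) (hl _ _ (by omega) (by omega) (by omega) (by omega))

namespace EmissionPair

variable {L a : ℤ}

theorem not_wall_between (hG : H.LivePast 0) (hP : H.EmissionPair L a) {q : ℤ}
    (h : 0 ∈ H.signals q L) (h₁ : a < q := by omega) (h₂ : q < a + L := by omega) : False := by
  obtain ⟨hL, ha, ha', -, hl, hr⟩ := hP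
  by_cases hc : q - a ≤ a + L - q
  · exact not_meet_of_speed_eq_add_one (hl.mem (v := 1)) h h₁ hG.live
  · exact not_meet_of_speed_eq_add_one h (hr.mem (v := -1)) h₂ hG.live

theorem not_emits_between (hG : H.LivePast 0) (hP : H.EmissionPair L a) {q t : ℤ}
    (h : H.Emits q t) (h₁ : a < q := by omega) (h₂ : q < a + L := by omega)
    (ht : L ≤ t := by omega) : False := by
  have ⟨hL, ha, ha', _, _, _⟩ := hP
  exact hP.not_wall_between hG (q := q) (mem_signals_later (h.mem (v := 0)) hG.live)

/-- Before the pair, nothing is emitted at the cells strictly between its two points. -/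
theorem neg_one_mem_signals_earlier (hG : H.LivePast 0) (hP : H.EmissionPair L a)
    (h : -1 ∈ H.arrivals a L) {t : ℤ} (ht : L < t := by omega) (ht' : t ≤ 2 * L := by omega) :
    -1 ∈ H.signals (a + (t - L)) t := by
  have ⟨hL, ha, ha', _, _, _⟩ := hP
  exact mem_signals_earlier h hG.live fun s _ _ hE => hP.not_emits_between hG hE

theorem not_odd_odd (hG : H.LivePast 0) (hP : H.EmissionPair L a) {s : ℤ}
    (h : -1 ∈ H.arrivals a L) (h' : 1 ∈ H.arrivals (a + L) (L + s)) (hs : 0 ≤ s) (hs' : s < L) :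
    False := by
  have ⟨hL, ha, ha', _, _, _⟩ := hP
  have hl := hP.neg_one_mem_signals_earlier hG h (t := 2 * L)
  have hr : 1 ∈ H.signals (a + s) (2 * L) :=
    mem_signals_earlier h' hG.live fun s _ _ hE => hP.not_emits_between hG hE
  obtain ⟨m, hm, hE⟩ := exists_emits_of_speed_eq_add_two hr hl fun m _ _ => hG.live
  exact hP.not_emits_between hG hE

theorem not_even_even (hG : H.LivePast 0) (hP : H.EmissionPair L a)
    (h : 0 ∈ H.arrivals a L) (h' : 2 ∈ H.arrivals (a + L) L) : False := by
  have ⟨hL, ha, ha', hpar, hEl, hEr⟩ := hP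
  rcases hpar with rfl | ⟨k, rfl⟩
  · refine H.not_crossing (hG.live (q := a) (t := 1)) (q := a - 1) (by omega) (by omega)
      (v := 2) ?_ ?_
    · convert mem_arrivals.1 h' using 2; ring
    · simpa using mem_arrivals.1 h
  have hr : 2 ∈ H.signals a (3 * k) :=
    mem_signals_earlier h' hG.live fun s _ _ hE => hP.not_emits_between hG hE
  obtain ⟨s, hs, hsk, hE⟩ : ∃ s, 0 < s ∧ s ≤ k ∧ H.Emits a (2 * k + s) := by
    by_contra! hcon
    have hw : 0 ∈ H.signals a (3 * k) := mem_signals_earlier h hG.live fun s _ _ hE =>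
      hcon (s - 2 * k) (by omega) (by omega) (by convert hE using 1 <;> ring)
    exact hcon k (by omega) le_rfl (by convert emits_of_mem_signals hG.live hr hw using 1; ring)
  exact not_emits_twice hE.mem hEl.mem hEr.mem fun q t _ _ _ _ => hG.live

theorem zero_mem_signals_right_earlier (hG : H.LivePast 0) (hP : H.EmissionPair L a)
    (h : -1 ∈ H.arrivals a L) (h' : 0 ∈ H.arrivals (a + L) L) {t : ℤ} (ht : L < t := by omega)
    (ht' : t ≤ 2 * L := by omega) : 0 ∈ H.signals (a + L) t := by
  have ⟨_, ha, ha', _, _, _⟩ := hP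
  induction t, (show L + 1 ≤ t from ht) using Int.leInduction with
  | base => simpa using mem_arrivals.1 h'
  | succ t hLt ih =>
    have hl : H.live (a + L) t := hG.live
    suffices 0 ∈ H.arrivals (a + L) t by simpa using mem_arrivals.1 this
    refine (emits_or_mem_arrivals hl (ih (by omega) (by omega))).elim (fun hE => ?_) id
    rcases hE.arrivals_eq hl with hA | hA
    · simp [hA]
    · exact (hP.not_odd_odd hG (s := t - L) h (by simp [hA]) (by omega) (by omega)).elim

theorem one_mem_signals_double (hG : H.LivePast 0) (hP : H.EmissionPair L a)
    (hl : -1 ∈ H.arrivals a L) (hr : 0 ∈ H.arrivals (a + L) L) (h : 1 ∈ H.arrivals a L) :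
    1 ∈ H.signals (a - L) (2 * L) := by
  have ⟨hL, ha, ha', hpar, hEl, hEr⟩ := hP
  refine mem_signals_earlier h hG.live fun t ht ht' hE => ?_
  obtain ⟨d, rfl⟩ : ∃ d, t = L + d := ⟨t - L, by ring⟩
  obtain ⟨p, rfl⟩ : ∃ p, a = p + d := ⟨a - d, by ring⟩
  replace hE : H.Emits p (L + d) := by convert hE using 1; ring
  by_cases hc : 2 * d ≤ L
  · exact not_meet_of_speed_eq_add_one
      (mem_signals_later (t' := L) (q := p) (hE.mem (v := 0)) hG.live) (hEl.mem (v := -1))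
      (by omega) hG.live
  obtain ⟨k, rfl⟩ : ∃ k, L = 2 * k := hpar.resolve_left (by omega)
  -- The stationary signal at `a + L` turns the signal of speed `2` into a new emission point, too
  -- late not to disturb the one in the middle of the pair.
  have hW := hP.zero_mem_signals_right_earlier hG hl hr (t := 2 * k + d)
  obtain ⟨m, hm, hE₁⟩ := exists_emits_of_speed_eq_add_two (hE.mem (v := 2)) hW
    fun m _ _ => hG.live
  have hE₂ : H.Emits (p + d + k) k :=
    emits_of_emits_of_emits (v := 1) (L := k) hEl hEr hG.live
  have hmid := mem_signals_later (q := p + 2 * m - (k - (m - d))) (t' := k) (hE₁.mem (v := -1))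
    hG.live
  exact not_meet_of_speed_eq_add_one (hE₂.mem (v := 0)) hmid (by omega) hG.live

theorem two_mem_signals_double (hG : H.LivePast 0) (hP : H.EmissionPair L a)
    (hl : -1 ∈ H.arrivals a L) (h : 2 ∈ H.arrivals (a + L) L) :
    2 ∈ H.signals (a - L) (2 * L) := by
  have ⟨hL, ha, ha', _, _, _⟩ := hP
  refine mem_signals_earlier h hG.live fun t ht ht' hE => ?_
  obtain ⟨d, rfl⟩ : ∃ d, t = L + d := ⟨t - L, by ring⟩
  replace hE : H.Emits (a + L - 2 * d) (L + d) := by convert hE using 1; ring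
  rcases lt_trichotomy L (2 * d) with hc | hc | hc
  · obtain ⟨m, hm, hE'⟩ := exists_emits_of_speed_eq_add_two (hE.mem (v := 1))
      (hP.neg_one_mem_signals_earlier hG hl) fun m _ _ => hG.live
    exact hP.not_emits_between hG hE'
  · have h0 : 0 ∈ H.arrivals a L := mem_arrivals.2 <|
      mem_signals_later (hE.mem (v := 0)) hG.live
    exact absurd (two_dvd_sub_of_mem_arrivals hG.live hl h0) (by decide)
  · exact hP.not_emits_between hG hE

theorem double_of_odd_even (hG : H.LivePast 0) (hP : H.EmissionPair L a)
    (hodd : H.arrivals a L = {-1, 1}) (heven : H.arrivals (a + L) L = {-2, 0, 2}) :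
    H.EmissionPair (2 * L) (a - L) := by
  have ⟨hL, ha, ha', _, _, _⟩ := hP
  have hl : -1 ∈ H.arrivals a L := by simp [hodd]
  have hr : 0 ∈ H.arrivals (a + L) L := by simp [heven]
  refine ⟨by omega, by omega, by omega, .inr ⟨L, rfl⟩, ?_, ?_⟩
  · exact emits_of_mem_signals hG.live (hP.one_mem_signals_double hG hl hr (by simp [hodd]))
      (hP.two_mem_signals_double hG hl (by simp [heven]))
  · have h := hP.neg_one_mem_signals_earlier hG hl (t := 2 * L)
    rw [two_mul, add_sub_cancel_right, ← two_mul] at h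
    convert emits_of_mem_signals hG.live (hP.zero_mem_signals_right_earlier hG hl hr) h using 1
    ring

theorem double (hG : H.LivePast 0) (hP : H.EmissionPair L a) :
    H.EmissionPair (2 * L) (a - L) ∨ H.EmissionPair (2 * L) a := by
  have ⟨hL, ha, ha', _, hEl, hEr⟩ := hP
  rcases hEl.arrivals_eq hG.live with hl | hl <;> rcases hEr.arrivals_eq hG.live with hr | hr
  · exact (hP.not_even_even hG (by simp [hl]) (by simp [hr])).elim
  · right
    convert (hP.mirror.double_of_odd_even hG.mirror ?_ ?_).of_mirror using 1
    · ring
    · rw [mirror_arrivals, show -(-a - L) = a + L by ring, hr]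
      decide
    · rw [mirror_arrivals, show -(-a - L + L) = a by ring, hl]
      decide
  · exact .inl (hP.double_of_odd_even hG hl hr)
  · exact (hP.not_odd_odd hG (s := 0) (by simp [hl]) (by simp [hr]) le_rfl hL).elim

theorem not_emits_earlier (hG : H.LivePast 0) (hP : H.EmissionPair L a)
    (h₂ : H.Emits a (2 * L)) {d : ℤ} (hE : H.Emits (a - 2 * d) (L + d)) (hd : 0 < d)
    (hdL : d < L) : False := by
  have ⟨hL, ha, ha', hpar, hEl, hEr⟩ := hP
  by_cases hc : 2 * d ≤ L
  · have hW : 0 ∈ H.signals a (L + d) := mem_signals_later h₂.mem hG.live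
    exact not_meet_of_speed_eq_add_one (hE.mem (v := 1)) hW (by omega) hG.live
  obtain ⟨k, rfl⟩ : ∃ k, L = 2 * k := hpar.resolve_left (by omega)
  -- Two reflections produce an emission point at `a` shortly before that at time `k`.
  have hleft := mem_signals_later (q := a - (2 * k - d)) (t' := 2 * k + d) (h₂.mem (v := -1))
    hG.live
  obtain ⟨m, hm, hE₁⟩ := exists_emits_of_speed_eq_add_two (hE.mem (v := 1)) hleft
    fun m _ _ => hG.live
  have hW : 0 ∈ H.signals a (2 * k + d - m) := mem_signals_later h₂.mem hG.live
  obtain ⟨n, hn, hE₂⟩ := exists_emits_of_speed_eq_add_two (hE₁.mem (v := 2)) hW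
    fun n _ _ => hG.live
  have hE₃ : H.Emits a k := emits_of_emits_of_emits (v := 0) (L := k) hEl hEr hG.live
  have hright : -1 ∈ H.signals (a + k) k := mem_signals_later hEr.mem hG.live
  refine not_emits_twice (a := a) (d := k) (t := k) (s := k + d - m - n) ?_ hE₃.mem hright
    fun q t _ _ _ _ => hG.live
  convert hE₂.mem (v := 1) using 2
  omega

theorem emits_left_of_emits_of_emits (hG : H.LivePast 0) (hP : H.EmissionPair L a)
    (h₂ : H.Emits a (2 * L)) (h₄ : H.Emits a (4 * L)) : H.Emits (a - 2 * L) (2 * L) := by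
  have ⟨hL, ha, ha', _, hEl, _⟩ := hP
  have hA : H.arrivals a L = {-2, 0, 2} := (hEl.arrivals_eq hG.live).resolve_right fun hA => by
    have h0 : 0 ∈ H.arrivals a L := mem_arrivals.2 <| mem_signals_later h₂.mem hG.live
    simp [hA] at h0
  have h2 : 2 ∈ H.signals (a - 2 * L) (2 * L) := by
    refine mem_signals_earlier (show 2 ∈ H.arrivals a L by simp [hA]) hG.live fun t _ _ hE => ?_
    refine hP.not_emits_earlier hG h₂ (d := t - L) ?_ (by omega) (by omega)
    rwa [add_sub_cancel]
  exact emits_of_mem_signals hG.live h2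
    (mem_signals_later (h₄.mem (v := -1)) hG.live)

theorem emits_left_left (hG : H.LivePast 0) (hP : H.EmissionPair L a) : H.Emits (a - L) L := by
  have ⟨hL, ha, ha', _, _, _⟩ := hP
  rcases hP.double hG with hD | hD
  · exact emits_of_emits_of_emits (v := 0) (L := L) hD.emits_left hD.emits_right hG.live
  · have hE : H.Emits (a - 2 * L) (2 * L) := by
      rcases hD.double hG with hQ | hQ
      · exact emits_of_emits_of_emits (v := 0) (L := 2 * L) hQ.emits_left hQ.emits_right hG.live
      · refine hP.emits_left_of_emits_of_emits hG hD.emits_left ?_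
        convert hQ.emits_left using 1
        ring
    refine emits_of_emits_of_emits (v := 1) (L := L) hE ?_ hG.live
    convert hD.emits_left using 1
    ring

theorem emits_right_right (hG : H.LivePast 0) (hP : H.EmissionPair L a) :
    H.Emits (a + 2 * L) L := by
  convert mirror_emits.1 (hP.mirror.emits_left_left hG.mirror) using 1
  ring

end EmissionPair

theorem exists_emissionPair (hG : H.LivePast 0) (h₀ : H.Emits 0 1) (h₁ : H.Emits 1 1) (n : ℕ) :
    ∃ a, H.EmissionPair (2 ^ n) a := by
  induction n with
  | zero => exact ⟨0, by norm_num, by norm_num, by norm_num, .inl (by norm_num), h₀, h₁⟩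
  | succ n ih =>
    obtain ⟨a, hP⟩ := ih
    rw [pow_succ']
    exact (hP.double hG).elim (⟨_, ·⟩) (⟨_, ·⟩)

theorem emits_one_of_emits_pow {i : ℤ} (hi : H.LivePast i) {n : ℕ} {a : ℤ}
    (h₁ : H.Emits a (2 ^ n)) (h₂ : H.Emits (a + 2 ^ n) (2 ^ n)) (ha : a ≤ i)
    (hai : i < a + 2 ^ n) : H.Emits i 1 ∧ H.Emits (i + 1) 1 := by
  induction n generalizing a with
  | zero =>
    obtain rfl : a = i := by omega
    exact ⟨h₁, h₂⟩
  | succ n ih =>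
    have hn : (1 : ℤ) ≤ 2 ^ n := one_le_pow₀ one_le_two
    rw [pow_succ'] at h₁ h₂ hai
    have h {q v : ℤ} (hv : 0 ≤ v ∧ v ≤ 2) (hq : q = a + v * 2 ^ n) (h : i - 2 * 2 ^ n ≤ q)
        (h' : q ≤ i + 2 * 2 ^ n) : H.Emits q (2 ^ n) :=
      emits_of_emits_of_emits h₁ h₂ hi.live (by omega) hv hq
    by_cases hc : i < a + 2 ^ n
    · exact ih (a := a) (h (v := 0) (by omega) (by omega) (by omega) (by omega))
        (h (v := 1) (by omega) (by omega) (by omega) (by omega)) ha hc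
    · exact ih (a := a + 2 ^ n) (h (v := 1) (by omega) (by omega) (by omega) (by omega))
        (h (v := 2) (by omega) (by omega) (by omega) (by omega)) (by omega) (by omega)

theorem emits_one (hG : H.LivePast 0) (h₀ : H.Emits 0 1) (h₁ : H.Emits 1 1) {i : ℤ}
    (hi : H.LivePast i) : H.Emits i 1 ∧ H.Emits (i + 1) 1 := by
  obtain ⟨n, hn⟩ := pow_unbounded_of_one_lt |i| (one_lt_two (α := ℤ))
  obtain ⟨a, hP⟩ := exists_emissionPair hG h₀ h₁ n
  have ⟨_, ha, ha', _, hEl, hEr⟩ := hP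
  have := abs_lt.1 hn
  rcases lt_or_ge i a with hia | hia
  · exact emits_one_of_emits_pow hi (hP.emits_left_left hG) (by rwa [sub_add_cancel]) (by omega)
      (by omega)
  rcases lt_or_ge i (a + 2 ^ n) with hia' | hia'
  · exact emits_one_of_emits_pow hi hEl hEr hia hia'
  · refine emits_one_of_emits_pow hi hEr ?_ hia' (by omega)
    convert hP.emits_right_right hG using 1
    ring

end History

/-! ### The cellular automaton -/

/-- The states of the cellular automaton: a cell is dead, firing, or live and then contains a set of
signals. -/
inductive State
  | dead
  | fire
  | live (A : ↥speeds.powerset)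
  deriving Fintype

namespace State

/-- The cell is neither dead nor firing. -/
def IsLive : State → Prop
  | live _ => True
  | _ => False

/-- The speeds of the signals in a cell. -/
def signals : State → Finset ℤ
  | live A => A
  | _ => ∅

/-- The state of an emission point. -/
def full : State := live ⟨speeds, Finset.mem_powerset_self _⟩

theorem signals_subset : ∀ b : State, b.signals ⊆ speeds
  | live A => Finset.mem_powerset.1 A.2
  | dead | fire => Finset.empty_subset _

end State

open State

/-- The local rule, as a function of the states at the cells `-20, …, 20`: a cell fires when
it is surrounded by emission points only, and it dies when one of the laws of a `History` would
be violated. -/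
def transition (n : ℤ → State) : State :=
  open Classical in
  if ∃ d ∈ Set.Icc (-20) 20, ¬ (n d).IsLive then dead
  else if ∀ d ∈ Set.Icc (-20) 20, n d = full then fire
  else if ∃ d ∈ Set.Ico (-20) 20, ∃ v ∈ (n d).signals, v - 2 ∈ (n (d + 1)).signals then dead
  else if h : ∃ A, IsUpdate (incoming (fun d => (n d).signals) 0) A.1 then live h.choose
  else dead

theorem dependsOn_transition : DependsOn transition (Set.Icc (-20) 20) := by
  intro (n : ℤ → State) (m : ℤ → State) h
  have h₁ : (∃ d ∈ Set.Icc (-20) 20, ¬ (n d).IsLive) ↔ ∃ d ∈ Set.Icc (-20) 20, ¬ (m d).IsLive :=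
    exists_congr fun d => and_congr_right fun hd => by rw [h d hd]
  have h₂ : (∀ d ∈ Set.Icc (-20) 20, n d = full) ↔ ∀ d ∈ Set.Icc (-20) 20, m d = full :=
    forall₂_congr fun d hd => by rw [h d hd]
  have h₃ : (∃ d ∈ Set.Ico (-20) 20, ∃ v ∈ (n d).signals, v - 2 ∈ (n (d + 1)).signals) ↔
      ∃ d ∈ Set.Ico (-20) 20, ∃ v ∈ (m d).signals, v - 2 ∈ (m (d + 1)).signals :=
    exists_congr fun d => and_congr_right fun hd => by
      rw [h d ⟨hd.1, hd.2.le⟩, h (d + 1) ⟨by have := hd.1; omega, hd.2⟩]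
  have h₄ : incoming (fun d => (n d).signals) 0 = incoming (fun d => (m d).signals) 0 :=
    Finset.filter_congr fun v hv => by
      have := mem_speeds.1 hv
      simp only [h (0 - v) ⟨by omega, by omega⟩]
  classical
  rw [transition, transition, h₄]
  exact if_congr h₁ rfl (if_congr h₂ rfl (if_congr h₃ rfl rfl))

theorem transition_eq_dead {n : ℤ → State} {d : ℤ} (hd : d ∈ Set.Icc (-20) 20)
    (h : n d = dead) : transition n = dead :=
  if_pos ⟨d, hd, by simp [h, IsLive]⟩

theorem eq_full_of_transition_eq_fire {n : ℤ → State} (h : transition n = fire) {d : ℤ}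
    (hd : d ∈ Set.Icc (-20) 20) : n d = full := by
  unfold transition at h
  split_ifs at h with _ h₂
  exact h₂ d hd

theorem transition_eq_fire {n : ℤ → State} (h : ∀ d ∈ Set.Icc (-20) 20, n d = full) :
    transition n = fire := by
  rw [transition, if_neg, if_pos h]
  push Not
  exact fun d hd => h d hd ▸ trivial

theorem transition_spec {n : ℤ → State} (h : (transition n).IsLive) :
    (∀ d ∈ Set.Icc (-20) 20, (n d).IsLive) ∧
    (∀ d ∈ Set.Ico (-20) 20, ∀ v ∈ (n d).signals, v - 2 ∉ (n (d + 1)).signals) ∧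
    IsUpdate (incoming (fun d => (n d).signals) 0) (transition n).signals := by
  unfold transition at h ⊢
  split_ifs at h ⊢ with h₁ _ h₃ h₄
  · exact h.elim
  · exact h.elim
  · exact h.elim
  · push Not at h₁ h₃
    exact ⟨h₁, h₃, h₄.choose_spec⟩
  · exact h.elim

theorem transition_eq_live {n : ℤ → State} {A : ↥speeds.powerset}
    (hlive : ∀ d ∈ Set.Icc (-20) 20, (n d).IsLive)
    (hcross : ∀ d ∈ Set.Ico (-20) 20, ∀ v ∈ (n d).signals, v - 2 ∉ (n (d + 1)).signals)
    (hA : IsUpdate (incoming (fun d => (n d).signals) 0) A.1) : transition n = live A := by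
  have h : ∃ A : ↥speeds.powerset, IsUpdate (incoming (fun d => (n d).signals) 0) A.1 := ⟨A, hA⟩
  have hfull (h : ∀ d ∈ Set.Icc (-20) 20, n d = full) : False := by
    refine hcross 0 (by norm_num) 1 ?_ ?_
    · rw [h 0 (by norm_num)]
      decide
    · rw [h (0 + 1) (by norm_num)]
      decide
  rw [transition, if_neg (by push Not; exact hlive), if_neg hfull,
    if_neg (by push Not; exact hcross), dif_pos h]
  exact congrArg live (Subtype.ext (h.choose_spec.unique hA))

/-- The global map of the cellular automaton. -/
def squad : Config State → Config State := caMap 20 (ofWindow 20 transition)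

theorem squad_apply (x : Config State) (i : ℤ) : squad x i = transition fun d => x (i + d) :=
  caMap_ofWindow dependsOn_transition x i

/-- The history leading to the configuration `x 0`. -/
def historyOf (x : ℤ → Config State) (hx : ∀ t, 0 ≤ t → squad (x (t + 1)) = x t) : History where
  live p t := 0 ≤ t ∧ (x t p).IsLive
  signals p t := (x t p).signals
  signals_subset p t := (x t p).signals_subset
  live_succ {p q t} h h₁ h₂ := by
    obtain ⟨ht, h⟩ := h
    rw [← hx t ht, squad_apply] at h
    refine ⟨by omega, ?_⟩
    simpa using (transition_spec h).1 (q - p) ⟨by omega, by omega⟩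
  not_crossing {p q t v} h h₁ h₂ hv hw := by
    obtain ⟨ht, h⟩ := h
    rw [← hx t ht, squad_apply] at h
    refine (transition_spec h).2.1 (q - p) ⟨by omega, by omega⟩ v (by simpa using hv) ?_
    rwa [← add_assoc, add_sub_cancel]
  isUpdate {p t} h := by
    obtain ⟨ht, h⟩ := h
    rw [← hx t ht, squad_apply] at h ⊢
    have := (transition_spec h).2.2
    rwa [incoming_translate (fun q => (x (t + 1) q).signals), add_zero] at this

theorem eq_dead_or_eq_fire_of_mem_limitSet {x : Config State} (hx : x ∈ limitSet squad)
    (h₀ : x 0 = fire) (i : ℤ) : x i = dead ∨ x i = fire := by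
  obtain ⟨y, rfl, hy⟩ : ∃ y : ℕ → Config State, y 0 = x ∧ ∀ n, squad (y (n + 1)) = y n :=
    exists_backward_orbit_of_mem_limitSet hx
  let H := historyOf (fun t => y t.toNat) fun t ht => by
    rw [Int.toNat_add ht zero_le_one]
    exact hy _
  have hfull {q : ℤ} (hq : q ∈ Set.Icc (-20) 20) : y 1 q = full := by
    rw [← hy 0, squad_apply] at h₀
    simpa using eq_full_of_transition_eq_fire h₀ hq
  have hemits {q : ℤ} (hq : q ∈ Set.Icc (-20) 20) : H.Emits q 1 :=
    congrArg State.signals (hfull hq)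
  have hG : H.LivePast 0 := .of_one fun q h₁ h₂ =>
    ⟨zero_le_one, (congrArg IsLive (hfull (q := q) ⟨by omega, by omega⟩)).mpr trivial⟩
  cases hxi : y 0 i with
  | dead => exact .inl rfl
  | fire => exact .inr rfl
  | live A =>
    have hl : H.live i 0 := ⟨le_rfl, (congrArg IsLive hxi).mpr trivial⟩
    obtain ⟨h₁, h₂⟩ := History.emits_one hG (hemits (by norm_num)) (hemits (by norm_num))
      (History.LivePast.of_one fun q h₁ h₂ => H.live_succ hl h₁ h₂)
    exact absurd (h₂.mem (v := 1 - 2)) <|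
      H.not_crossing hl (by omega) (by omega) (h₁.mem (v := 1))

/-! ### Configurations firing at a given time -/

/-- The configuration whose emission points were at the multiples of `L`, all of them `s` steps
earlier. -/
def grid (L s : ℤ) : Config State := fun p =>
  live ⟨{v ∈ speeds | L ∣ p - v * s}, Finset.mem_powerset.2 (Finset.filter_subset _ _)⟩

theorem mem_signals_grid {L s p v : ℤ} :
    v ∈ (grid L s p).signals ↔ v ∈ speeds ∧ L ∣ p - v * s := Finset.mem_filter

theorem incoming_grid (L s p : ℤ) :
    incoming (fun d => (grid L s (p + d)).signals) 0 = (grid L (s + 1) p).signals := by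
  ext v
  rw [mem_incoming, mem_signals_grid, mem_signals_grid, and_self_left,
    show p + (0 - v) - v * s = p - v * (s + 1) by ring]

theorem not_crossing_grid {L s p v : ℤ} (hL : 2 ∣ L) (hv : v ∈ (grid L s p).signals) :
    v - 2 ∉ (grid L s (p + 1)).signals := by
  intro hw
  have h := hL.trans (dvd_sub (mem_signals_grid.1 hw).2 (mem_signals_grid.1 hv).2)
  rw [show p + 1 - (v - 2) * s - (p - v * s) = 2 * s + 1 by ring] at h
  omega

theorem squad_grid {L s p : ℤ} {A : ↥speeds.powerset} (hL : 2 ∣ L)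
    (hA : IsUpdate (grid L (s + 1) p).signals A.1) : squad (grid L s) p = live A := by
  rw [squad_apply]
  refine transition_eq_live (fun _ _ => trivial) (fun d _ v hv => ?_) (by rwa [incoming_grid])
  rw [← add_assoc]
  exact not_crossing_grid hL hv

theorem two_pow_dvd_of_dvd_mul {k : ℕ} {w n : ℤ} (hw : ¬ 4 ∣ w) (h : 2 ^ (k + 1) ∣ w * n) :
    2 ^ k ∣ n := by
  have hcop {u : ℤ} (hu : Odd u) (j : ℕ) : IsCoprime (2 ^ j) u :=
    (Int.isCoprime_two_left.2 hu).pow_left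
  rcases Int.even_or_odd' w with ⟨u, rfl | rfl⟩
  · rw [pow_succ', mul_assoc, mul_dvd_mul_iff_left two_ne_zero] at h
    exact (hcop (Int.not_even_iff_odd.1 fun ⟨c, hc⟩ => hw ⟨c, by omega⟩) k).dvd_of_dvd_mul_left h
  · exact (pow_dvd_pow 2 k.le_succ).trans ((hcop ⟨u, rfl⟩ _).dvd_of_dvd_mul_left h)

theorem squad_grid_two_pow {k : ℕ} {s : ℤ} (hs : 0 ≤ s) (hsk : s + 1 < 2 ^ k) :
    squad (grid (2 ^ (k + 1)) s) = grid (2 ^ (k + 1)) (s + 1) := by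
  funext p
  refine squad_grid (dvd_pow_self 2 k.succ_ne_zero) (.inr ⟨fun v hv w hw => ?_, rfl⟩)
  by_contra hvw
  have h := dvd_sub (mem_signals_grid.1 hw).2 (mem_signals_grid.1 hv).2
  rw [show p - w * (s + 1) - (p - v * (s + 1)) = (v - w) * (s + 1) by ring] at h
  have := Int.le_of_dvd (by omega) (two_pow_dvd_of_dvd_mul hvw h)
  omega

theorem squad_grid_two_mul {L : ℤ} (hL : L ≠ 0) : squad (grid (2 * L) (L - 1)) = grid L 0 := by
  funext p
  refine squad_grid (Dvd.intro L rfl) ?_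
  rw [sub_add_cancel]
  change IsUpdate ({v ∈ speeds | 2 * L ∣ p - v * L}) ({v ∈ speeds | L ∣ p - v * 0})
  simp only [mul_zero, sub_zero]
  by_cases hp : L ∣ p
  · obtain ⟨c, rfl⟩ := hp
    refine .inl ⟨?_, Finset.filter_true_of_mem fun _ _ => Dvd.intro c rfl⟩
    have h (v : ℤ) : 2 * L ∣ L * c - v * L ↔ 2 ∣ c - v := by
      rw [show L * c - v * L = (c - v) * L by ring, mul_dvd_mul_iff_right hL]
    simp only [h]
    rcases Int.even_or_odd' c with ⟨c, rfl | rfl⟩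
    · left
      ext v
      simp only [Finset.mem_filter, mem_speeds, Finset.mem_insert, Finset.mem_singleton]
      omega
    · right
      ext v
      simp only [Finset.mem_filter, mem_speeds, Finset.mem_insert, Finset.mem_singleton]
      omega
  · have h (v : ℤ) : ¬ 2 * L ∣ p - v * L := fun h =>
      hp ((dvd_sub_left (Dvd.intro_left v rfl)).1 ((Dvd.intro_left 2 rfl).trans h))
    simp [h, hp, IsUpdate]

theorem squad_grid_one : squad (grid 1 0) = fun _ => fire := by
  funext p
  rw [squad_apply]
  exact transition_eq_fire fun d _ => congrArg live (Subtype.ext (by simp))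

/-- The configurations firing after exactly `J` steps. Since `2 ^ J.size` is the least power of `2`
above `J`, it is the distance of the emission points when `J + 1` steps remain. -/
def countdown : ℕ → Config State
  | 0 => fun _ => fire
  | J + 1 => grid (2 ^ J.size) (2 ^ J.size - (J + 1))

theorem squad_countdown (J : ℕ) : squad (countdown (J + 1)) = countdown J := by
  rcases J with _ | J
  · simpa [countdown] using squad_grid_one
  simp only [countdown]
  rcases (Nat.succ_le_of_lt J.lt_size_self).eq_or_lt with h | h
  · have hsize : (J + 1).size = J.size + 1 := (congrArg Nat.size h).trans Nat.size_pow
    have hcast : ((J + 1 : ℕ) : ℤ) = 2 ^ J.size := by exact_mod_cast h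
    convert squad_grid_two_mul (L := 2 ^ J.size) (by positivity) using 3
    · rw [hsize, pow_succ']
    · rw [hsize, pow_succ', hcast]
      ring
    · rw [← hcast]
      simp
  · have hsize : (J + 1).size = J.size :=
      (Nat.size_le.2 h).antisymm (Nat.size_le_size J.le_succ)
    obtain ⟨k, hk⟩ : ∃ k, J.size = k + 1 :=
      Nat.exists_eq_succ_of_ne_zero fun h₀ => by simp [h₀] at h
    have hlt : (J : ℤ) + 1 < 2 ^ (k + 1) := by rw [← hk]; exact_mod_cast h
    have hle : (2 : ℤ) ^ k ≤ J := mod_cast Nat.lt_size.1 (hk ▸ k.lt_succ_self)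
    rw [hsize, hk]
    convert squad_grid_two_pow (k := k) (s := 2 ^ (k + 1) - ((J + 1 : ℕ) + 1)) ?_ ?_ using 2
    · push_cast
      ring
    · push_cast
      omega
    · push_cast
      rw [pow_succ]
      omega

theorem iterate_squad_countdown (j J : ℕ) : squad^[j] (countdown (J + j)) = countdown J := by
  induction j with
  | zero => rfl
  | succ j ih => rw [Function.iterate_succ_apply, ← add_assoc, squad_countdown, ih]

theorem iterate_squad_countdown_self (J : ℕ) : squad^[J] (countdown J) = fun _ => fire := by
  simpa [countdown] using iterate_squad_countdown J 0

theorem iterate_squad_countdown_ne_fire {j J : ℕ} (hj : j < J) (i : ℤ) :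
    squad^[j] (countdown J) i ≠ fire := by
  obtain ⟨m, rfl⟩ := Nat.exists_eq_add_of_lt hj
  rw [show j + m + 1 = m + 1 + j by ring, iterate_squad_countdown]
  nofun

end

/-- The Firing Squad construction: there are a finite alphabet `B`, a cellular
automaton `S` on `B` and states `κ, γ ∈ B`, with `κ` spreading, such that
(1) for every `J` some configuration reaches the uniform configuration of `γ`'s at
time exactly `J`, the state `γ` appearing nowhere before time `J`; and
(2) every configuration of the limit set of `S` containing `γ` at position `0`
only carries the states `κ` and `γ`. -/
theorem firing_squad_exists :
    ∃ (B : Type) (_ : Fintype B) (r : ℕ) (f : (Fin (2 * r + 1) → B) → B) (κ γ : B),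
      SpreadingRule f κ ∧
      (∀ J : ℕ, ∃ z : Config B, (caMap r f)^[J] z = (fun _ => γ) ∧
        ∀ (i : ℤ) (j : ℕ), j < J → (caMap r f)^[j] z i ≠ γ) ∧
      (∀ x ∈ limitSet (caMap r f), x 0 = γ → ∀ i : ℤ, x i = κ ∨ x i = γ) := by
  exact ⟨State, inferInstance, 20, ofWindow 20 transition, .dead, .fire,
    spreadingRule_ofWindow fun _ _ hd h => transition_eq_dead hd h,
    fun J => ⟨countdown J, iterate_squad_countdown_self J,
      fun i _ hj => iterate_squad_countdown_ne_fire hj i⟩,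
    fun _ hx h₀ => eq_dead_or_eq_fire_of_mem_limitSet hx h₀⟩
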